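/- Vanishing of non-matching string correlators in class AIII (Theorem 3, α ≠ ω part). Let N_z, N_Z ≥ 0 be integers, z_1,…,z_{N_z} ∈ ℂ with |z_j| < 1, and Z_1,…,Z_{N_Z} ∈ ℂ with |Z_k| > 1. Define W(z) = (1/2) Σ_{j=1}^{N_z} [ Log(1 − z_j/z) − Log(1 − conj(z_j)·z) ] + (1/2) Σ_{k=1}^{N_Z} [ Log(1 − z/Z_k) − Log(1 − 1/(conj(Z_k)·z)) ], with Log the principal branch of the logarithm. Then for every nonzero integer m, the symbol t_m(e^{iθ}) = e^{imθ} · exp(W(e^{iθ})) satisfies lim_{N→∞} D_N[t_m] = 0. (For the AIII chain with winding number ω, this says the string correlator ⟨Õ_α(1)Õ_α(N+1)⟩ = |D_N[t_{ω−α}]|² tends to 0 for every α ≠ ω.) -/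

import Mathlib

open scoped BigOperators
open Filter

/-- The `k`-th Fourier coefficient of a symbol `t` on the unit circle. -/
noncomputable def symbolCoeff (t : ℂ → ℂ) (k : ℤ) : ℂ :=
  (1 / (2 * Real.pi)) *
    ∫ θ in (0:ℝ)..(2 * Real.pi),
      t (Complex.exp (Complex.I * (θ : ℂ))) * Complex.exp (-(Complex.I * (k : ℂ) * (θ : ℂ)))

/-- The `N × N` Toeplitz determinant `D_N[t]` generated by the symbol `t`. -/
noncomputable def toeplitzDet (t : ℂ → ℂ) (N : ℕ) : ℂ :=
  Matrix.det (Matrix.of fun m n : Fin N => symbolCoeff t ((m : ℤ) - (n : ℤ)))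

/-- The function `W(z)` built from principal-branch logarithms, so that `e^{W}` is the
(winding-number-removed) AIII symbol. -/
noncomputable def aiiiW (Nz NZ : ℕ) (z : Fin Nz → ℂ) (Z : Fin NZ → ℂ) (w : ℂ) : ℂ :=
  (1 / 2) * ∑ j, (Complex.log (1 - z j / w) - Complex.log (1 - (starRingEnd ℂ) (z j) * w)) +
  (1 / 2) * ∑ k, (Complex.log (1 - w / Z k) - Complex.log (1 - 1 / ((starRingEnd ℂ) (Z k) * w)))

open MeasureTheory Complex

/-- A contraction of a finite-dimensional inner product space expands every vector at least by the
modulus of its determinant. -/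
theorem LinearMap.norm_det_mul_norm_le {E : Type*} [NormedAddCommGroup E] [InnerProductSpace ℂ E]
    [FiniteDimensional ℂ E] (A : E →ₗ[ℂ] E) (hA : ∀ v, ‖A v‖ ≤ ‖v‖) (v : E) :
    ‖A.det‖ * ‖v‖ ≤ ‖A v‖ := by
  have hS := A.isSymmetric_adjoint_mul_self
  set b := hS.eigenvectorBasis rfl
  set l := hS.eigenvalues rfl
  have happ : ∀ i, A.adjoint (A (b i)) = (l i : ℂ) • b i := fun i =>
    hS.apply_eigenvectorBasis rfl i
  have hinner : ∀ i, inner ℂ (b i) (A.adjoint (A v)) = (l i : ℂ) * inner ℂ (b i) v := by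
    intro i
    rw [LinearMap.adjoint_inner_right, ← LinearMap.adjoint_inner_left, happ, inner_smul_left,
      conj_ofReal]
  have hlnorm : ∀ i, l i = ‖A (b i)‖ ^ 2 := by
    intro i
    have h : inner ℂ (A.adjoint (A (b i))) (b i) = (‖A (b i)‖ ^ 2 : ℂ) := by
      rw [LinearMap.adjoint_inner_left, inner_self_eq_norm_sq_to_K]; rfl
    rw [happ, inner_smul_left, inner_self_eq_norm_sq_to_K, b.norm_eq_one] at h
    simp only [conj_ofReal, RCLike.ofReal_one, one_pow, mul_one] at h
    exact_mod_cast h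
  have hl0 : ∀ i, 0 ≤ l i := fun i => by rw [hlnorm]; positivity
  have hl1 : ∀ i, l i ≤ 1 := fun i => by
    rw [hlnorm]
    exact pow_le_one₀ (norm_nonneg _) ((hA _).trans_eq (b.norm_eq_one i))
  have hdet : ‖A.det‖ ^ 2 = ∏ i, l i := by
    have h := A.normDet_sq
    have h2 : (A.adjoint ∘ₗ A).det = ∏ i, (l i : ℂ) := hS.det_eq_prod_eigenvalues rfl
    rw [h2, A.normDet_eq_norm_det] at h
    exact ofReal_injective (by simpa using h)
  have hdl : ∀ i, ‖A.det‖ ^ 2 ≤ l i := by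
    intro i
    rw [hdet, ← Finset.mul_prod_erase _ _ (Finset.mem_univ i)]
    exact mul_le_of_le_one_right (hl0 i) (Finset.prod_le_one (fun j _ => hl0 j) fun j _ => hl1 j)
  have hAv : ‖A v‖ ^ 2 = ∑ i, l i * ‖inner ℂ (b i) v‖ ^ 2 := by
    have h : inner ℂ v (A.adjoint (A v)) = (‖A v‖ ^ 2 : ℂ) := by
      rw [LinearMap.adjoint_inner_right, inner_self_eq_norm_sq_to_K]; rfl
    rw [← b.sum_inner_mul_inner] at h
    have h2 : ∀ i, inner ℂ v (b i) * inner ℂ (b i) (A.adjoint (A v))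
        = ((l i * ‖inner ℂ (b i) v‖ ^ 2 : ℝ) : ℂ) := by
      intro i
      rw [hinner, ← inner_conj_symm, mul_left_comm, RCLike.conj_mul]
      push_cast
      rfl
    simp_rw [h2] at h
    exact_mod_cast h.symm
  refine (sq_le_sq₀ (by positivity) (norm_nonneg _)).1 ?_
  rw [mul_pow, hAv, ← b.sum_sq_norm_inner_right v, Finset.mul_sum]
  exact Finset.sum_le_sum fun i _ => mul_le_mul_of_nonneg_right (hdl i) (by positivity)

section Fourier

open AddCircle

variable {T : ℝ} [hT : Fact (0 < T)]

/-- Finitely many Fourier coefficients are controlled by the `L²` norm. -/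
theorem sum_sq_norm_fourierCoeff_le (f : C(AddCircle T, ℂ)) (N : ℕ) :
    ∑ k : Fin N, ‖fourierCoeff f (k : ℤ)‖ ^ 2 ≤
      ‖ContinuousMap.toLp (E := ℂ) 2 haarAddCircle ℂ f‖ ^ 2 := by
  have hinj : Function.Injective fun k : Fin N => ((k : ℕ) : ℤ) := fun a b h => by
    simpa [Fin.ext_iff] using h
  have h := ((orthonormal_fourier (T := T)).comp _ hinj).sum_inner_products_le
    (ContinuousMap.toLp (E := ℂ) 2 haarAddCircle ℂ f) (s := Finset.univ)
  refine le_of_eq_of_le (Finset.sum_congr rfl fun k _ => ?_) h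
  rw [← fourierCoeff_toLp, ← fourierBasis_repr, HilbertBasis.repr_apply_apply, coe_fourierBasis]
  rfl

/-- Multiplication by a unimodular continuous function preserves the `L²` norm. -/
theorem norm_toLp_mul_of_norm_eq_one {t : C(AddCircle T, ℂ)} (ht : ∀ x, ‖t x‖ = 1)
    (f : C(AddCircle T, ℂ)) :
    ‖ContinuousMap.toLp (E := ℂ) 2 haarAddCircle ℂ (t * f)‖ =
      ‖ContinuousMap.toLp (E := ℂ) 2 haarAddCircle ℂ f‖ := by
  refine le_antisymm (Lp.norm_le_norm_of_ae_le ?_) (Lp.norm_le_norm_of_ae_le ?_) <;>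
  · filter_upwards [ContinuousMap.coeFn_toLp (p := 2) (𝕜 := ℂ) haarAddCircle (t * f),
      ContinuousMap.coeFn_toLp (p := 2) (𝕜 := ℂ) haarAddCircle f] with x h1 h2
    rw [h1, h2]
    simp [ht]

/-- The trigonometric polynomial with coefficients `v` in degrees `0, …, N - 1`. -/
noncomputable def trigPoly {N : ℕ} (v : Fin N → ℂ) : C(AddCircle T, ℂ) :=
  ∑ n, v n • fourier (n : ℤ)

theorem norm_sq_toLp_trigPoly {N : ℕ} (v : Fin N → ℂ) :
    ‖ContinuousMap.toLp (E := ℂ) 2 (haarAddCircle (T := T)) ℂ (trigPoly v)‖ ^ 2 =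
      ∑ n, ‖v n‖ ^ 2 := by
  have hinj : Function.Injective fun k : Fin N => ((k : ℕ) : ℤ) := fun a b h => by
    simpa [Fin.ext_iff] using h
  have ho := (orthonormal_fourier (T := T)).comp _ hinj
  have h : ContinuousMap.toLp (E := ℂ) 2 (haarAddCircle (T := T)) ℂ (trigPoly v) =
      ∑ n, v n • (fourierLp 2 ∘ fun k : Fin N => ((k : ℕ) : ℤ)) n := by
    simp [trigPoly, fourierLp]
  have h2 := inner_self_eq_norm_sq_to_K (𝕜 := ℂ)
    (ContinuousMap.toLp (E := ℂ) 2 (haarAddCircle (T := T)) ℂ (trigPoly v))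
  rw [h, ho.inner_sum] at h2
  rw [h]
  simp_rw [RCLike.conj_mul] at h2
  exact_mod_cast h2.symm

theorem integrable_continuousMap (f : C(AddCircle T, ℂ)) : Integrable f haarAddCircle :=
  f.continuous.integrable_of_hasCompactSupport (HasCompactSupport.of_compactSpace _)

theorem fourierCoeff_mul_trigPoly (t : C(AddCircle T, ℂ)) {N : ℕ} (v : Fin N → ℂ) (k : ℤ) :
    fourierCoeff (t * trigPoly v : C(AddCircle T, ℂ)) k =
      ∑ n : Fin N, fourierCoeff t (k - (n : ℤ)) * v n := by
  have h : ((t * trigPoly v : C(AddCircle T, ℂ)) : AddCircle T → ℂ) =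
      ∑ n : Fin N, ⇑(t * (v n • fourier (n : ℤ)) : C(AddCircle T, ℂ)) := by
    ext x
    simp [trigPoly, Finset.mul_sum]
  rw [h, fourierCoeff.sum _ _ fun n _ => integrable_continuousMap _, Finset.sum_apply]
  refine Finset.sum_congr rfl fun n _ => ?_
  simp only [fourierCoeff]
  rw [← integral_mul_const]
  congr 1
  ext x
  have hx : fourier (-(k - (n : ℤ))) x = fourier (-k) x * fourier (n : ℤ) x := by
    rw [← fourier_add, neg_sub, sub_eq_neg_add]
  simp only [ContinuousMap.coe_mul, ContinuousMap.coe_smul, Pi.mul_apply, Pi.smul_apply,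
    smul_eq_mul, hx]
  ring

/-- The Fourier partial sums of a function in the Hardy space converge to it in `L²`. -/
theorem tendsto_norm_toLp_trigPoly_sub (f : C(AddCircle T, ℂ))
    (hneg : ∀ k : ℤ, k < 0 → fourierCoeff f k = 0) :
    Tendsto (fun N => ‖ContinuousMap.toLp (E := ℂ) 2 haarAddCircle ℂ
      (trigPoly (fun n : Fin N => fourierCoeff f (n : ℤ)) - f)‖) atTop (nhds 0) := by
  have hs := hasSum_fourier_series_L2 (ContinuousMap.toLp (E := ℂ) 2 haarAddCircle ℂ f)
  simp_rw [fourierCoeff_toLp] at hs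
  have hoff : ∀ k ∉ Set.range (Nat.cast : ℕ → ℤ),
      fourierCoeff f k • fourierLp (T := T) 2 k = 0 := by
    intro k hk
    have hk0 : k < 0 := by
      by_contra! h
      exact hk ⟨k.toNat, by simpa using h⟩
    rw [hneg k hk0, zero_smul]
  have hc := ((Nat.cast_injective.hasSum_iff hoff).2 hs).tendsto_sum_nat
  rw [tendsto_iff_norm_sub_tendsto_zero] at hc
  refine hc.congr fun N => ?_
  rw [map_sub, Finset.sum_range]
  simp only [trigPoly, map_sum, map_smul]
  rfl

/-- If `t` is unimodular and some `f` in the Hardy space with nonzero mean satisfies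
`P₊ (t f) = 0`, then the Toeplitz determinants of `t` tend to zero. -/
theorem tendsto_det_fourierCoeff_zero (t f : C(AddCircle T, ℂ)) (ht : ∀ x, ‖t x‖ = 1)
    (hneg : ∀ k : ℤ, k < 0 → fourierCoeff f k = 0) (hzero : fourierCoeff f 0 ≠ 0)
    (hker : ∀ k : ℤ, 0 ≤ k → fourierCoeff (t * f : C(AddCircle T, ℂ)) k = 0) :
    Tendsto (fun N : ℕ => Matrix.det (Matrix.of fun m n : Fin N =>
      fourierCoeff t ((m : ℤ) - (n : ℤ)))) atTop (nhds 0) := by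
  set L := ContinuousMap.toLp (E := ℂ) 2 (haarAddCircle (T := T)) ℂ
  let v : ∀ N : ℕ, Fin N → ℂ := fun N n => fourierCoeff f (n : ℤ)
  have hlim : Tendsto (fun N => ‖L (trigPoly (v N) - f)‖) atTop (nhds 0) :=
    tendsto_norm_toLp_trigPoly_sub f hneg
  have hbound : ∀ N : ℕ, 1 ≤ N → ‖Matrix.det (Matrix.of fun m n : Fin N =>
      fourierCoeff t ((m : ℤ) - (n : ℤ)))‖ ≤
        ‖L (trigPoly (v N) - f)‖ / ‖fourierCoeff f 0‖ := by
    intro N hN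
    set M : Matrix (Fin N) (Fin N) ℂ :=
      Matrix.of fun m n : Fin N => fourierCoeff t ((m : ℤ) - (n : ℤ))
    have hMapp : ∀ (u : EuclideanSpace ℂ (Fin N)) (k : Fin N),
        (Matrix.toEuclideanLin M u) k =
          fourierCoeff (t * trigPoly u.ofLp : C(AddCircle T, ℂ)) (k : ℤ) := by
      intro u k
      rw [fourierCoeff_mul_trigPoly]
      rfl
    have hcontr : ∀ u, ‖Matrix.toEuclideanLin M u‖ ≤ ‖u‖ := by
      intro u
      refine (sq_le_sq₀ (by positivity) (norm_nonneg _)).1 ?_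
      rw [EuclideanSpace.norm_sq_eq, EuclideanSpace.norm_sq_eq]
      simp_rw [hMapp]
      refine (sum_sq_norm_fourierCoeff_le _ _).trans_eq ?_
      rw [norm_toLp_mul_of_norm_eq_one ht, norm_sq_toLp_trigPoly]
    have hsmall : ‖Matrix.toEuclideanLin M (WithLp.toLp 2 (v N))‖ ≤ ‖L (trigPoly (v N) - f)‖ := by
      refine (sq_le_sq₀ (by positivity) (norm_nonneg _)).1 ?_
      rw [EuclideanSpace.norm_sq_eq, ← norm_toLp_mul_of_norm_eq_one ht]
      refine le_of_eq_of_le (Finset.sum_congr rfl fun k _ => ?_)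
        (sum_sq_norm_fourierCoeff_le _ N)
      have h1 : (t * trigPoly (v N) : C(AddCircle T, ℂ)) =
          t * (trigPoly (v N) - f) + t * f := by ring
      rw [hMapp, h1, ContinuousMap.coe_add,
        fourierCoeff.add (integrable_continuousMap _) (integrable_continuousMap _),
        Pi.add_apply, hker _ (Int.natCast_nonneg _), add_zero]
    have hlarge : ‖fourierCoeff f 0‖ ≤ ‖(WithLp.toLp 2 (v N) : EuclideanSpace ℂ (Fin N))‖ :=
      PiLp.norm_apply_le (WithLp.toLp 2 (v N) : EuclideanSpace ℂ (Fin N)) ⟨0, hN⟩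
    have hdet : (Matrix.toEuclideanLin M).det = M.det := by
      rw [Matrix.toEuclideanLin, Matrix.toLpLin_eq_toLin, LinearMap.det_toLin]
    rw [le_div_iff₀ (norm_pos_iff.2 hzero), ← hdet]
    exact (mul_le_mul_of_nonneg_left hlarge (norm_nonneg _)).trans
      ((LinearMap.norm_det_mul_norm_le _ hcontr _).trans hsmall)
  refine squeeze_zero_norm' (eventually_atTop.2 ⟨1, hbound⟩) ?_
  simpa using hlim.div_const ‖fourierCoeff f 0‖

end Fourier

section Symbol

local instance fact_two_pi_pos : Fact (0 < 2 * Real.pi) := ⟨Real.two_pi_pos⟩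

/-- Restriction of a function on `ℂ` to the unit circle, parametrized by the angle. -/
noncomputable def circleRestrict (F : ℂ → ℂ) (hF : ContinuousOn F (Metric.sphere 0 1)) :
    C(AddCircle (2 * Real.pi), ℂ) where
  toFun x := F (AddCircle.toCircle x)
  continuous_toFun := hF.comp_continuous
    (continuous_subtype_val.comp AddCircle.continuous_toCircle) fun x => by
      rw [mem_sphere_zero_iff_norm]
      exact Circle.norm_coe _

theorem fourierCoeff_circleRestrict (F : ℂ → ℂ) (hF : ContinuousOn F (Metric.sphere 0 1))
    (k : ℤ) : fourierCoeff (circleRestrict F hF) k = symbolCoeff F k := by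
  rw [fourierCoeff_eq_intervalIntegral _ _ 0, symbolCoeff, zero_add]
  rw [real_smul]
  push_cast
  congr 1
  refine intervalIntegral.integral_congr fun θ _ => ?_
  have hpi : (Real.pi : ℂ) ≠ 0 := by exact_mod_cast Real.pi_ne_zero
  have hcircle : ((AddCircle.toCircle (θ : AddCircle (2 * Real.pi)) : Circle) : ℂ) =
      exp (I * θ) := by
    rw [AddCircle.toCircle_apply_mk, div_self Real.two_pi_pos.ne', one_mul, Circle.coe_exp,
      mul_comm]
  have hfourier : fourier (-k) (θ : AddCircle (2 * Real.pi)) = exp (-(I * k * θ)) := by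
    rw [fourier_coe_apply]
    congr 1
    push_cast
    field_simp
  simp only [hfourier, circleRestrict, ContinuousMap.coe_mk, hcircle, smul_eq_mul]
  exact mul_comm (exp (-(I * k * θ))) (F (exp (I * θ)))

/-- Inverting the variable of a symbol reflects its Fourier coefficients. -/
theorem symbolCoeff_comp_inv (F : ℂ → ℂ) (k : ℤ) :
    symbolCoeff (fun w => F w⁻¹) k = symbolCoeff F (-k) := by
  have hexp : ∀ (j : ℤ) (θ : ℝ), exp (-(I * (j : ℂ) * ((2 * Real.pi - θ : ℝ) : ℂ))) =
      exp (I * (j : ℂ) * θ) := by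
    intro j θ
    rw [exp_eq_exp_iff_exists_int]
    exact ⟨-j, by push_cast; ring⟩
  have h := intervalIntegral.integral_comp_sub_left (a := 0) (b := 2 * Real.pi)
    (fun θ : ℝ => F (exp (I * θ))⁻¹ * exp (-(I * (k : ℂ) * θ))) (2 * Real.pi)
  rw [sub_self, sub_zero] at h
  rw [symbolCoeff, symbolCoeff, ← h]
  congr 1
  refine intervalIntegral.integral_congr fun θ _ => ?_
  have h1 : (exp (I * ((2 * Real.pi - θ : ℝ) : ℂ)))⁻¹ = exp (I * θ) := by
    rw [← Complex.exp_neg]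
    simpa using hexp 1 θ
  simp only [h1, hexp]
  congr 2
  push_cast
  ring

/-- The Toeplitz determinant is invariant under inversion of the variable. -/
theorem toeplitzDet_comp_inv (F : ℂ → ℂ) (N : ℕ) :
    toeplitzDet (fun w => F w⁻¹) N = toeplitzDet F N := by
  rw [toeplitzDet, toeplitzDet, ← Matrix.det_transpose]
  congr 1
  ext i j
  simp [symbolCoeff_comp_inv]

/-- Nonpositive Fourier coefficients of a function holomorphic in the unit disc. -/
theorem symbolCoeff_neg_natCast {F : ℂ → ℂ} (hF : DiffContOnCl ℂ F (Metric.ball 0 1)) (n : ℕ) :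
    symbolCoeff F (-(n : ℤ)) = F 0 * 0 ^ n := by
  have hd : DiffContOnCl ℂ (fun w => w ^ n • F w) (Metric.ball 0 |1|) := by
    rw [abs_one]
    exact (differentiable_id.pow n).diffContOnCl.smul hF
  have h := hd.circleAverage
  rw [Real.circleAverage_def, smul_eq_mul] at h
  rw [mul_comm, ← h, symbolCoeff, real_smul]
  push_cast
  rw [one_div]
  congr 1
  refine intervalIntegral.integral_congr fun θ _ => ?_
  simp only [circleMap, ofReal_one, one_mul, zero_add, smul_eq_mul, ← Complex.exp_nat_mul,
    mul_comm (θ : ℂ) I]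
  rw [mul_comm]
  congr 2
  ring

/-- The symbol `w⁻ⁿ exp (g w + h w⁻¹)` with `n > 0`, unimodular on the circle and with `g` and `h`
holomorphic in the disc, has Toeplitz determinants tending to zero. -/
theorem tendsto_toeplitzDet_of_factorization {t g h : ℂ → ℂ} {n : ℕ} (hn : n ≠ 0)
    (hg : DiffContOnCl ℂ g (Metric.ball 0 1)) (hh : DiffContOnCl ℂ h (Metric.ball 0 1))
    (ht : ∀ w : ℂ, ‖w‖ = 1 → t w = (w⁻¹) ^ n * exp (g w + h w⁻¹))
    (hre : ∀ w : ℂ, ‖w‖ = 1 → (g w + h w⁻¹).re = 0) :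
    Tendsto (toeplitzDet t) atTop (nhds 0) := by
  have hsub : Metric.sphere (0 : ℂ) 1 ⊆ closure (Metric.ball 0 1) := by
    rw [closure_ball _ one_ne_zero]
    exact Metric.sphere_subset_closedBall
  have hinv : ContinuousOn (fun w : ℂ => w⁻¹) (Metric.sphere 0 1) :=
    continuousOn_inv₀.mono fun w hw => Metric.ne_of_mem_sphere hw one_ne_zero
  have hmaps : Set.MapsTo (fun w : ℂ => w⁻¹) (Metric.sphere 0 1) (Metric.sphere 0 1) :=
    fun w hw => by simpa using hw
  have hgc := hg.continuousOn.mono hsub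
  have hhc := (hh.continuousOn.mono hsub).comp hinv hmaps
  have htc : ContinuousOn t (Metric.sphere 0 1) := by
    refine ((hinv.pow n).mul (hgc.add hhc).cexp).congr fun w hw => ?_
    exact ht w (by simpa using hw)
  have hf : DiffContOnCl ℂ (fun w => exp (-g w)) (Metric.ball 0 1) :=
    Complex.differentiable_exp.comp_diffContOnCl hg.neg
  have hfc := hf.continuousOn.mono hsub
  have hs : DiffContOnCl ℂ (fun w => w ^ n * exp (h w)) (Metric.ball 0 1) :=
    (differentiable_id.pow n).diffContOnCl.smul (Complex.differentiable_exp.comp_diffContOnCl hh)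
  have hsc := (hs.continuousOn.mono hsub).comp hinv hmaps
  have hprod : circleRestrict t htc * circleRestrict _ hfc = circleRestrict _ hsc := by
    ext x
    simp only [circleRestrict, ContinuousMap.mul_apply, ContinuousMap.coe_mk, Function.comp]
    rw [ht _ (Circle.norm_coe _), mul_assoc, ← Complex.exp_add]
    congr 2
    ring
  have key := tendsto_det_fourierCoeff_zero (circleRestrict t htc) (circleRestrict _ hfc)
    (fun x => ?_) (fun k hk => ?_) ?_ fun k hk => ?_
  · simp only [fourierCoeff_circleRestrict] at key
    exact key
  · have hx : ‖((AddCircle.toCircle x : Circle) : ℂ)‖ = 1 := Circle.norm_coe _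
    simp only [circleRestrict, ContinuousMap.coe_mk]
    rw [ht _ hx, norm_mul, norm_pow, norm_inv, hx, Complex.norm_exp, hre _ hx]
    simp
  · obtain ⟨j, rfl⟩ : ∃ j : ℕ, k = -(j : ℤ) := ⟨k.natAbs, by omega⟩
    rw [fourierCoeff_circleRestrict, symbolCoeff_neg_natCast hf, zero_pow (by omega), mul_zero]
  · have h0 := symbolCoeff_neg_natCast hf 0
    rw [Nat.cast_zero, neg_zero] at h0
    rw [fourierCoeff_circleRestrict, h0]
    simp
  · lift k to ℕ using hk
    rw [hprod, fourierCoeff_circleRestrict]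
    refine (symbolCoeff_comp_inv (fun w => w ^ n * exp (h w)) k).trans ?_
    rw [symbolCoeff_neg_natCast hs]
    simp [hn]

end Symbol

theorem re_one_sub_mul_pos {a w : ℂ} (ha : ‖a‖ < 1) (hw : ‖w‖ ≤ 1) : 0 < (1 - a * w).re := by
  have h1 : ‖a * w‖ < 1 := by
    rw [norm_mul]
    exact (mul_le_of_le_one_right (norm_nonneg _) hw).trans_lt ha
  have h2 := re_le_norm (a * w)
  rw [sub_re, one_re]
  linarith

theorem diffContOnCl_log_one_sub_mul {a : ℂ} (ha : ‖a‖ < 1) :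
    DiffContOnCl ℂ (fun w => log (1 - a * w)) (Metric.ball 0 1) := by
  refine DifferentiableOn.diffContOnCl fun w hw => DifferentiableAt.differentiableWithinAt ?_
  rw [closure_ball _ one_ne_zero, mem_closedBall_zero_iff] at hw
  exact DifferentiableAt.clog (by fun_prop) (Or.inl (re_one_sub_mul_pos ha hw))

/-- Conjugating `1 - a w` on the unit circle does not change the real part of its logarithm. -/
theorem re_log_one_sub_mul_eq {a w : ℂ} (hw : ‖w‖ = 1) :
    (log (1 - a * w⁻¹)).re = (log (1 - (starRingEnd ℂ) a * w)).re := by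
  have h : (starRingEnd ℂ) w = w⁻¹ := (inv_eq_conj hw).symm
  rw [log_re, log_re, ← norm_conj (1 - (starRingEnd ℂ) a * w)]
  simp [h]

theorem diffContOnCl_sum_log_one_sub_mul {ι : Type*} [Fintype ι] {a : ι → ℂ}
    (ha : ∀ j, ‖a j‖ < 1) :
    DiffContOnCl ℂ (fun w => ∑ j, log (1 - a j * w)) (Metric.ball 0 1) :=
  ⟨DifferentiableOn.fun_sum fun i _ => (diffContOnCl_log_one_sub_mul (ha i)).differentiableOn,
    continuousOn_finsetSum _ fun i _ => (diffContOnCl_log_one_sub_mul (ha i)).continuousOn⟩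

/-- Theorem 3, `α ≠ ω` part: for every nonzero winding `m`, the Toeplitz determinant of
the symbol `z^m · e^{W(z)}` tends to `0`, i.e. the non-matching AIII string correlators
vanish in the limit. -/
theorem aiii_nonmatching_string_correlators_vanish
    (Nz NZ : ℕ) (z : Fin Nz → ℂ) (Z : Fin NZ → ℂ)
    (hz : ∀ j, ‖z j‖ < 1) (hZ : ∀ k, 1 < ‖Z k‖)
    (m : ℤ) (hm : m ≠ 0) :
    Tendsto
      (fun N : ℕ =>
        toeplitzDet (fun w => w ^ m * Complex.exp (aiiiW Nz NZ z Z w)) N)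
      atTop (nhds 0) := by
  have hz' : ∀ j, ‖(starRingEnd ℂ) (z j)‖ < 1 := fun j => by rw [norm_conj]; exact hz j
  have hZ' : ∀ k, ‖(Z k)⁻¹‖ < 1 := fun k => by
    rw [norm_inv]; exact inv_lt_one_of_one_lt₀ (hZ k)
  have hZ'' : ∀ k, ‖(starRingEnd ℂ) (Z k)⁻¹‖ < 1 := fun k => by rw [norm_conj]; exact hZ' k
  set g : ℂ → ℂ := fun w => (1 / 2 : ℂ) *
    (∑ k, log (1 - (Z k)⁻¹ * w) - ∑ j, log (1 - (starRingEnd ℂ) (z j) * w)) with hg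
  set h : ℂ → ℂ := fun w => (1 / 2 : ℂ) *
    (∑ j, log (1 - z j * w) - ∑ k, log (1 - (starRingEnd ℂ) (Z k)⁻¹ * w)) with hh
  have hgd : DiffContOnCl ℂ g (Metric.ball 0 1) :=
    ((diffContOnCl_sum_log_one_sub_mul hZ').sub (diffContOnCl_sum_log_one_sub_mul hz')).const_smul
      (1 / 2 : ℂ)
  have hhd : DiffContOnCl ℂ h (Metric.ball 0 1) :=
    ((diffContOnCl_sum_log_one_sub_mul hz).sub (diffContOnCl_sum_log_one_sub_mul hZ'')).const_smul
      (1 / 2 : ℂ)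
  have hW : ∀ w, aiiiW Nz NZ z Z w = g w + h w⁻¹ := by
    intro w
    simp only [aiiiW, hg, hh, Finset.sum_sub_distrib, div_eq_mul_inv, mul_inv, one_mul, map_inv₀,
      mul_comm w]
    ring
  have hre : ∀ w : ℂ, ‖w‖ = 1 → (g w + h w⁻¹).re = 0 := by
    intro w hw
    have h1 : ∀ j, (log (1 - z j * w⁻¹)).re = (log (1 - (starRingEnd ℂ) (z j) * w)).re :=
      fun j => re_log_one_sub_mul_eq hw
    have h2 : ∀ k, (log (1 - (starRingEnd ℂ) (Z k)⁻¹ * w⁻¹)).re =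
        (log (1 - (Z k)⁻¹ * w)).re := fun k => by
      rw [re_log_one_sub_mul_eq hw, conj_conj]
    have h3 : g w + h w⁻¹ = ((1 / 2 : ℝ) : ℂ) *
        ((∑ k, log (1 - (Z k)⁻¹ * w) - ∑ j, log (1 - (starRingEnd ℂ) (z j) * w)) +
        (∑ j, log (1 - z j * w⁻¹) - ∑ k, log (1 - (starRingEnd ℂ) (Z k)⁻¹ * w⁻¹))) := by
      simp only [hg, hh]
      push_cast
      ring
    rw [h3, re_ofReal_mul, add_re, sub_re, sub_re, re_sum, re_sum, re_sum, re_sum]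
    simp only [h1, h2]
    ring
  simp_rw [hW]
  obtain ⟨n, rfl | rfl⟩ := m.eq_nat_or_neg
  · simp_rw [← toeplitzDet_comp_inv (fun w => w ^ (n : ℤ) * _)]
    refine tendsto_toeplitzDet_of_factorization (n := n) (by simpa using hm) hhd hgd ?_ ?_
    · intro w _
      rw [zpow_natCast, inv_inv, add_comm]
    · intro w hw
      have := hre w⁻¹ (by simp [hw])
      rwa [inv_inv, add_comm] at this
  · refine tendsto_toeplitzDet_of_factorization (n := n) (by simpa using hm) hgd hhd ?_ hre
    intro w _
    rw [zpow_neg, zpow_natCast, inv_pow]
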